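/- For all integers k >= 0, j >= 0, m >= 1, r >= 1, setting n = 2m + kj, and for all rationals t_1, ..., t_m: \sum_{Q \in Q_{n,k,r}^{m,j}} \prod_{i=1}^{m} t_i^{\alpha_i(Q)} = (m/((m+j+1)(m+j))) * C(m+j, j) * C(m+j+1, r) * (r!/m!) * B_{m,r}(1!t_1, 2!t_2, ...). Consequently, for nonnegative integers r_1, ..., r_m with r_1 + 2*r_2 + ... + m*r_m = m and r = r_1 + ... + r_m, the number of words in Q_{n,k}^{m,j} with \alpha_i = r_i for all i equals (m/((m+j+1)(m+j))) * C(m+j, m) * C(m+j+1, r) * r!/(r_1! ... r_m!). -/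

import Mathlib

open Finset

inductive Step : Type
  | u | d | h
deriving DecidableEq

/-- Lengths of maximal blocks of letters with `wt s ≠ none`, weighted by `wt`. -/
def runs (wt : Step → Option ℕ) : List Step → List ℕ
  | [] => []
  | s :: l =>
    match wt s, runs wt l with
    | none, r => r
    | some n, r =>
      match l with
      | [] => [n]
      | s' :: _ =>
        match wt s' with
        | none => n :: r
        | some _ =>
          match r with
          | a :: rest => (n + a) :: rest
          | [] => [n]

def uRuns : List Step → List ℕ :=
  runs (fun s => match s with | Step.u => some 1 | _ => none)

def uhRuns (k : ℕ) : List Step → List ℕ :=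
  runs (fun s => match s with | Step.u => some 1 | Step.h => some k | Step.d => none)

def alpha (i : ℕ) (w : List Step) : ℕ := (uRuns w).count i

def beta (i : ℕ) (w : List Step) : ℕ := (uRuns w).tail.count i

def IsNonneg (w : List Step) : Prop :=
  ∀ i : ℕ, (w.take i).count Step.d ≤ (w.take i).count Step.u

def pathSet (m j : ℕ) : Set (List Step) :=
  {w | w.count Step.u = m ∧ w.count Step.d = m ∧ w.count Step.h = j ∧ IsNonneg w}

/-- no horizontal step lies on the x-axis -/
def NoLowH (w : List Step) : Prop :=
  ∀ (i : ℕ) (hi : i < w.length), w[i]'hi = Step.h →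
    (w.take i).count Step.u ≠ (w.take i).count Step.d

def qSet (m j : ℕ) : Set (List Step) :=
  {w | w ∈ pathSet m j ∧ NoLowH w}

/-- normalized partial Bell polynomial (r!/m!) B_{m,r}(1!t₁,2!t₂,…) -/
def bellNorm (m r : ℕ) (t : ℕ → ℚ) : ℚ :=
  ∑ f : Fin m → Fin (m + 1),
    if (∑ i : Fin m, (f i : ℕ)) = r ∧ (∑ i : Fin m, ((i : ℕ) + 1) * (f i : ℕ)) = m then
      (r.factorial : ℚ) / (∏ i : Fin m, ((f i : ℕ).factorial : ℚ)) * ∏ i : Fin m, t ((i : ℕ) + 1) ^ (f i : ℕ)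
    else 0

/-- normalized potential polynomial  P_p^{(lam)}(1!t₁,2!t₂,…)/p! -/
def potential (lam p : ℕ) (t : ℕ → ℚ) : ℚ :=
  ∑ r ∈ Finset.range (p + 1), (Nat.choose lam r : ℚ) * bellNorm p r t

/-!
Cut a word into blocks, each consisting of a non-up letter followed by a maximal (possibly empty)
run of up-steps, and give a run of length `i` the weight `f_i`, the coefficient of `x ^ i` in a
power series `f` with `f_0 = 1`. A word from height `l` to height `0` with `m` up-steps and `j`
horizontal steps has `N = l + m + j` non-up letters. Among all sequences of `N` blocks with these
totals, a fraction `l / N` of the weight belongs to those which first reach height `0` at the end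
(Kemperman's hitting-time formula), so those words weigh `l / N * C(N, j) * [x ^ m] f ^ N`.
Allowing an initial run of `a` up-steps raises the starting height to `l + a`; the sum over `a` is
evaluated with `∑ a * f_a * [x ^ (m - a)] f ^ N = m / (N + 1) * [x ^ m] f ^ (N + 1)`, the derivative
of `f ^ (N + 1)`. At `l = 0` the words with no horizontal step on the axis remain. Taking
`f = 1 + y * S` with `S = ∑ t_i x ^ i` and extracting `y ^ r` fixes the number of runs, and taking
indeterminates for the `t_i` counts the words with prescribed runs.
-/

/-! ### Blocks of up-steps -/

theorem uRuns_cons_of_ne {s : Step} (hs : s ≠ Step.u) (w : List Step) :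
    uRuns (s :: w) = uRuns w := by
  cases s with
  | u => contradiction
  | d | h => simp [uRuns, runs]

theorem uRuns_replicate_append_of_head?_ne (c : ℕ) {w : List Step} (hw : w.head? ≠ some Step.u) :
    uRuns (List.replicate (c + 1) Step.u ++ w) = (c + 1) :: uRuns w := by
  induction c with
  | zero =>
    rcases w with _ | ⟨s, w⟩
    · simp [uRuns, runs]
    · cases s <;> simp_all [uRuns, runs]
  | succ c ih =>
    rw [uRuns] at ih ⊢
    rw [List.replicate_succ, List.cons_append, runs, ih]
    simp [List.replicate_succ, add_comm]

theorem uRuns_replicate_append_cons (c : ℕ) {s : Step} (hs : s ≠ Step.u) (w : List Step) :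
    uRuns (List.replicate c Step.u ++ s :: w) = (if c = 0 then [] else [c]) ++ uRuns w := by
  rcases c with _ | c
  · simp [uRuns_cons_of_ne hs]
  · simp [uRuns_replicate_append_of_head?_ne c (w := s :: w) (by simpa using hs),
      uRuns_cons_of_ne hs]

theorem uRuns_replicate (c : ℕ) :
    uRuns (List.replicate c Step.u) = if c = 0 then [] else [c] := by
  rcases c with _ | c
  · rfl
  · simpa [uRuns, runs] using uRuns_replicate_append_of_head?_ne c (w := []) (by simp)

theorem block_induction {P : List Step → Prop} (replicate : ∀ c, P (List.replicate c Step.u))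
    (append : ∀ c s w, s ≠ Step.u → P w → P (List.replicate c Step.u ++ s :: w))
    (w : List Step) : P w := by
  suffices ∀ c, P (List.replicate c Step.u ++ w) by simpa using this 0
  induction w with
  | nil => simpa using replicate
  | cons s w ih =>
    intro c
    by_cases hs : s = Step.u
    · simpa [hs, List.replicate_succ'] using ih (c + 1)
    · exact append c s w hs (by simpa using ih 0)

theorem sum_uRuns (w : List Step) : (uRuns w).sum = w.count Step.u := by
  induction w using block_induction with
  | replicate c => rw [uRuns_replicate]; split_ifs <;> simp [*]
  | append c s w hs ih => rw [uRuns_replicate_append_cons c hs]; split_ifs <;> simp [*]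

theorem pos_of_mem_uRuns {w : List Step} {a : ℕ} (ha : a ∈ uRuns w) : 0 < a := by
  induction w using block_induction with
  | replicate c => rw [uRuns_replicate] at ha; grind
  | append c s w hs ih => rw [uRuns_replicate_append_cons c hs] at ha; grind

theorem mem_Icc_of_mem_uRuns {w : List Step} {a : ℕ} (ha : a ∈ uRuns w) :
    a ∈ Icc 1 (w.count Step.u) :=
  mem_Icc.2 ⟨pos_of_mem_uRuns ha, sum_uRuns w ▸ List.le_sum_of_mem ha⟩

@[to_additive]
theorem prod_map_uRuns {M : Type*} [CommMonoid M] (g : ℕ → M) (w : List Step) :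
    ((uRuns w).map g).prod = ∏ i ∈ Icc 1 (w.count Step.u), g i ^ alpha i w := by
  rw [prod_list_map_count]
  refine prod_subset (fun a ha => mem_Icc_of_mem_uRuns (List.mem_toFinset.1 ha)) fun a _ ha => ?_
  rw [List.count_eq_zero_of_not_mem (mt List.mem_toFinset.2 ha), pow_zero]

theorem sum_alpha (w : List Step) : ∑ i ∈ Icc 1 (w.count Step.u), alpha i w = (uRuns w).length := by
  simpa using (sum_map_uRuns (fun _ => (1 : ℕ)) w).symm

/-! ### Words descending to the axis -/

/-- The words leading from height `l` to height `0` that stay nonnegative and have no horizontal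
step on the axis. -/
def Descends : ℕ → List Step → Prop
  | l, [] => l = 0
  | l, Step.u :: w => Descends (l + 1) w
  | l, Step.d :: w => 1 ≤ l ∧ Descends (l - 1) w
  | l, Step.h :: w => 1 ≤ l ∧ Descends l w

theorem descends_iff (w : List Step) (l : ℕ) : Descends l w ↔
    (∀ i, (w.take i).count Step.d ≤ l + (w.take i).count Step.u) ∧
    l + w.count Step.u = w.count Step.d ∧
    ∀ i, w[i]? = some Step.h → l + (w.take i).count Step.u ≠ (w.take i).count Step.d := by
  induction w generalizing l with
  | nil => simp [Descends]
  | cons s w ih =>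
    rw [← Nat.and_forall_add_one, ← Nat.and_forall_add_one (p := fun i => _ = _ → _)]
    cases s with
    | u => simp [Descends, ih, add_right_comm, ← add_assoc]
    | h => simp [Descends, ih, Nat.one_le_iff_ne_zero, and_left_comm]
    | d =>
      rcases l with _ | l
      · refine iff_of_false (by simp [Descends]) fun h => ?_
        simpa using h.1.2 0
      · simp [Descends, ih, add_right_comm]

theorem mem_qSet_iff {m j : ℕ} {w : List Step} :
    w ∈ qSet m j ↔ Descends 0 w ∧ w.count Step.u = m ∧ w.count Step.h = j := by
  simp only [qSet, pathSet, IsNonneg, NoLowH, descends_iff, Set.mem_ofPred_eq, zero_add,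
    List.getElem?_eq_some_iff]
  grind

theorem Descends.length_eq {w : List Step} {l : ℕ} (h : Descends l w) :
    w.length = l + 2 * w.count Step.u + w.count Step.h := by
  induction w generalizing l with
  | nil => simpa [eq_comm, Descends] using h
  | cons s w ih =>
    cases s <;> grind [Descends]

instance : Finite Step :=
  .of_injective (fun s : Step => (s = Step.u, s = Step.d)) (by rintro ⟨⟩ ⟨⟩ <;> simp)

theorem finite_descends (l m j : ℕ) :
    {w | Descends l w ∧ w.count Step.u = m ∧ w.count Step.h = j}.Finite :=
  (List.finite_length_eq Step (l + 2 * m + j)).subset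
    fun _ ⟨hw, hm, hj⟩ => hm ▸ hj ▸ hw.length_eq

/-- The words descending from height `l` to `0` with `m` up-steps and `j` horizontal steps. -/
noncomputable def descents (l m j : ℕ) : Finset (List Step) :=
  (finite_descends l m j).toFinset

theorem mem_descents {l m j : ℕ} {w : List Step} :
    w ∈ descents l m j ↔ Descends l w ∧ w.count Step.u = m ∧ w.count Step.h = j := by
  simp [descents]

theorem coe_descents_zero (m j : ℕ) : (descents 0 m j : Set (List Step)) = qSet m j := by
  ext w
  rw [mem_coe, mem_descents, mem_qSet_iff]

/-! ### Weighted sums of words -/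

section Weights

open PowerSeries

variable {R : Type*} [CommSemiring R]

theorem coeff_X_mul_derivative (f : R⟦X⟧) (n : ℕ) :
    coeff n (X * d⁄dX R f) = n * coeff n f := by
  rcases n with _ | n
  · simp
  · rw [coeff_succ_X_mul, coeff_derivative, mul_comm]
    push_cast
    rfl

theorem sum_antidiagonal_mul_coeff_pow (f : R⟦X⟧) (N m : ℕ) :
    (N + 1) * ∑ p ∈ antidiagonal m, p.1 * coeff p.1 f * coeff p.2 (f ^ N) =
      m * coeff m (f ^ (N + 1)) := by
  have hpow : X * d⁄dX R (f ^ (N + 1)) = (N + 1) • (X * d⁄dX R f * f ^ N) := by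
    rw [derivative_pow, nsmul_eq_mul, Nat.add_sub_cancel]
    ring
  rw [← coeff_X_mul_derivative, hpow, map_nsmul, coeff_mul, nsmul_eq_mul]
  simp only [coeff_X_mul_derivative]
  push_cast
  rfl

/-- The weight of a word in which a block of `i` up-steps has weight `coeff i f`. -/
noncomputable def runWeight (f : R⟦X⟧) (w : List Step) : R :=
  ((uRuns w).map fun i => coeff i f).prod

/-- The total weight of the words `u^c w` with `w ∈ descents l m j`. -/
noncomputable def descentSum (f : R⟦X⟧) (c l m j : ℕ) : R :=
  ∑ w ∈ descents l m j, runWeight f (List.replicate c Step.u ++ w)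

/-- The total weight of the words in `descents l m j` that start at a block boundary, that is,
not with an up-step. -/
noncomputable def boundarySum (f : R⟦X⟧) (l m j : ℕ) : R :=
  ∑ w ∈ descents l m j with w.head? ≠ some Step.u, runWeight f w

theorem boundarySum_zero_left (f : R⟦X⟧) (m j : ℕ) :
    boundarySum f 0 m j = if m = 0 ∧ j = 0 then 1 else 0 := by
  have : ({w ∈ descents 0 m j | w.head? ≠ some Step.u} : Finset _) =
      if m = 0 ∧ j = 0 then {[]} else ∅ := by
    ext (_ | ⟨_ | _ | _, w⟩) <;> grind [mem_descents, Descends]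
  rw [boundarySum, this]
  split_ifs <;> simp [runWeight, uRuns, runs]

theorem boundarySum_succ_zero (f : R⟦X⟧) (l m : ℕ) :
    boundarySum f (l + 1) m 0 = descentSum f 0 l m 0 := by
  have hwords : ({w ∈ descents (l + 1) m 0 | w.head? ≠ some Step.u} : Finset _) =
      (descents l m 0).image (List.cons Step.d) := by
    ext (_ | ⟨_ | _ | _, w⟩) <;> simp [mem_descents, Descends]
  rw [boundarySum, hwords, sum_image (List.cons_injective.injOn)]
  simp [descentSum, runWeight, uRuns_cons_of_ne]

theorem boundarySum_succ_succ (f : R⟦X⟧) (l m j : ℕ) :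
    boundarySum f (l + 1) m (j + 1) = descentSum f 0 l m (j + 1) + descentSum f 0 (l + 1) m j := by
  have hwords : ({w ∈ descents (l + 1) m (j + 1) | w.head? ≠ some Step.u} : Finset _) =
      (descents l m (j + 1)).image (List.cons Step.d) ∪
        (descents (l + 1) m j).image (List.cons Step.h) := by
    ext (_ | ⟨_ | _ | _, w⟩) <;> simp [mem_descents, Descends]
  have hdisj : Disjoint ((descents l m (j + 1)).image (List.cons Step.d))
      ((descents (l + 1) m j).image (List.cons Step.h)) := by
    simp [disjoint_left]
  rw [boundarySum, hwords, sum_union hdisj, sum_image (List.cons_injective.injOn),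
    sum_image (List.cons_injective.injOn)]
  simp [descentSum, runWeight, uRuns_cons_of_ne]

variable {f : R⟦X⟧} (hf : coeff 0 f = 1)
include hf

theorem runWeight_replicate_append (c : ℕ) {w : List Step} (hw : w.head? ≠ some Step.u) :
    runWeight f (List.replicate c Step.u ++ w) = coeff c f * runWeight f w := by
  rcases c with _ | c
  · simp [hf]
  · simp [runWeight, uRuns_replicate_append_of_head?_ne c hw]

theorem descentSum_zero_right (c l j : ℕ) :
    descentSum f c l 0 j = coeff c f * boundarySum f l 0 j := by
  have hwords : ({w ∈ descents l 0 j | w.head? ≠ some Step.u} : Finset _) = descents l 0 j := by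
    ext (_ | ⟨_ | _ | _, w⟩) <;> simp [mem_descents]
  rw [boundarySum, mul_sum, descentSum]
  exact sum_congr hwords.symm fun w hw => runWeight_replicate_append hf c (mem_filter.1 hw).2

theorem descentSum_succ_eq_add (c l m j : ℕ) :
    descentSum f c l (m + 1) j =
      coeff c f * boundarySum f l (m + 1) j + descentSum f (c + 1) (l + 1) m j := by
  have hwords : ({w ∈ descents l (m + 1) j | ¬w.head? ≠ some Step.u} : Finset _) =
      (descents (l + 1) m j).image (List.cons Step.u) := by
    ext (_ | ⟨_ | _ | _, w⟩) <;> simp [mem_descents, Descends]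
  rw [descentSum, ← sum_filter_add_sum_filter_not _ (fun w => w.head? ≠ some Step.u), hwords,
    sum_image (List.cons_injective.injOn), boundarySum, mul_sum]
  congr 1
  · exact sum_congr rfl fun w hw => runWeight_replicate_append hf c (mem_filter.1 hw).2
  · simp [descentSum, List.replicate_succ']

theorem descentSum_eq_sum_antidiagonal (c l m j : ℕ) :
    descentSum f c l m j =
      ∑ p ∈ antidiagonal m, coeff (c + p.1) f * boundarySum f (l + p.1) p.2 j := by
  induction m generalizing c l with
  | zero => simp [descentSum_zero_right hf]
  | succ m ih =>
    rw [descentSum_succ_eq_add hf, ih, Nat.sum_antidiagonal_succ]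
    simp [add_assoc, add_comm 1]

end Weights

section HittingTime

open PowerSeries

variable {R : Type*} [CommRing R] {f : R⟦X⟧} (hf : coeff 0 f = 1)
include hf

theorem mul_descentSum_of_mul_boundarySum {l m j N : ℕ}
    (h : ∀ a b, a + b = m → (N : R) * boundarySum f (l + a) b j =
      (l + a) * N.choose j * coeff b (f ^ N)) :
    (N + 1 : R) * N * descentSum f 0 l m j =
      N.choose j * (l * (N + 1) + m) * coeff m (f ^ (N + 1)) := by
  have hsum : (N : R) * descentSum f 0 l m j = N.choose j *
      (l * coeff m (f ^ (N + 1)) +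
        ∑ p ∈ antidiagonal m, p.1 * coeff p.1 f * coeff p.2 (f ^ N)) := by
    rw [descentSum_eq_sum_antidiagonal hf, pow_succ', coeff_mul, mul_sum, mul_sum,
      ← sum_add_distrib, mul_sum]
    refine sum_congr rfl fun p hp => ?_
    rw [zero_add]
    linear_combination coeff p.1 f * h p.1 p.2 (mem_antidiagonal.1 hp)
  linear_combination (N + 1 : R) * hsum +
    (N.choose j : R) * sum_antidiagonal_mul_coeff_pow f N m

variable [IsDomain R] [CharZero R]

theorem mul_boundarySum_succ {N : ℕ}
    (hdescent : ∀ l m j, l + m + j = N → (N + 1 : R) * N * descentSum f 0 l m j =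
      N.choose j * (l * (N + 1) + m) * coeff m (f ^ (N + 1)))
    {l m j : ℕ} (hN : l + m + j = N) :
    (N + 1 : R) * boundarySum f (l + 1) m j =
      (l + 1) * (N + 1).choose j * coeff m (f ^ (N + 1)) := by
  rcases N.eq_zero_or_pos with rfl | hpos
  · obtain ⟨rfl, rfl, rfl⟩ : l = 0 ∧ m = 0 ∧ j = 0 := by omega
    simp [boundarySum_succ_zero, descentSum_zero_right hf, boundarySum_zero_left, hf]
  have hN0 : (N : R) ≠ 0 := by exact_mod_cast hpos.ne'
  apply mul_left_cancel₀ hN0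
  rcases j with _ | j
  · have hcast : (N : R) = l + m := by norm_cast; omega
    have h := hdescent l m 0 hN
    rw [boundarySum_succ_zero]
    push_cast [Nat.choose_zero_right] at h ⊢
    linear_combination h - coeff m (f ^ (N + 1)) * hcast
  · have hcast : (N : R) = l + m + j + 1 := by norm_cast; omega
    have hdown := hdescent l m (j + 1) hN
    have hhorizontal := hdescent (l + 1) m j (by omega)
    have hpascal : ((N + 1).choose (j + 1) : R) = N.choose j + N.choose (j + 1) :=
      mod_cast Nat.choose_succ_succ N j
    have habsorb : (N + 1 : R) * N.choose j = (N + 1).choose (j + 1) * (j + 1) :=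
      mod_cast Nat.add_one_mul_choose_eq N j
    rw [boundarySum_succ_succ]
    push_cast at hhorizontal ⊢
    linear_combination hdown + hhorizontal + (habsorb - hpascal * (l * (N + 1) + m) -
      (N + 1).choose (j + 1) * hcast) * coeff m (f ^ (N + 1))

theorem mul_boundarySum (l m j : ℕ) :
    ((l + m + j : ℕ) : R) * boundarySum f l m j =
      l * (l + m + j).choose j * coeff m (f ^ (l + m + j)) := by
  induction hN : l + m + j generalizing l m j with
  | zero =>
    obtain ⟨rfl, rfl, rfl⟩ : l = 0 ∧ m = 0 ∧ j = 0 := by omega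
    simp
  | succ N ih =>
    rcases l with _ | l
    · have hne : ¬(m = 0 ∧ j = 0) := by omega
      simp [boundarySum_zero_left, hne]
    · exact_mod_cast mul_boundarySum_succ hf
        (fun l m j h => mul_descentSum_of_mul_boundarySum hf fun a b hab =>
          mod_cast ih (l + a) b j (by omega)) (by omega : l + m + j = N)

theorem mul_descentSum (l m j : ℕ) :
    (l + m + j + 1 : R) * (l + m + j) * descentSum f 0 l m j =
      (l + m + j).choose j * (l * (l + m + j + 1) + m) * coeff m (f ^ (l + m + j + 1)) := by
  have h := mul_descentSum_of_mul_boundarySum hf (l := l) (m := m) (N := l + m + j)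
    fun a b hab => by
      have hN : l + a + b + j = l + m + j := by omega
      exact_mod_cast hN ▸ mul_boundarySum hf (l + a) b j
  exact_mod_cast h

end HittingTime

/-! ### Marking the number of blocks -/

section Marking

open PowerSeries
open scoped Polynomial

variable {R : Type*} [CommSemiring R]

/-- The series `1 + y S` over `R[y]`: as the generating function of block weights it multiplies
the weight of a word with `r` blocks by `y ^ r`. -/
noncomputable def markBlocks (S : R⟦X⟧) : R[X]⟦X⟧ :=
  1 + C Polynomial.X * PowerSeries.map Polynomial.C S

theorem coeff_zero_markBlocks {S : R⟦X⟧} (hS : coeff 0 S = 0) : coeff 0 (markBlocks S) = 1 := by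
  rw [markBlocks, map_add, coeff_C_mul, coeff_map, hS]
  simp

theorem runWeight_markBlocks (S : R⟦X⟧) (w : List Step) :
    runWeight (markBlocks S) w = Polynomial.monomial (uRuns w).length (runWeight S w) := by
  have hcoeff : ∀ i ∈ uRuns w,
      coeff i (markBlocks S) = Polynomial.X * Polynomial.C (coeff i S) := by
    intro i hi
    rw [markBlocks, map_add, coeff_C_mul, coeff_map, coeff_one,
      if_neg (pos_of_mem_uRuns hi).ne', zero_add]
  rw [← Polynomial.C_mul_X_pow_eq_monomial, ← Polynomial.X_pow_mul_C, runWeight,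
    List.map_congr_left hcoeff, List.prod_map_mul, runWeight, map_list_prod, List.map_map]
  simp [Function.comp_def]

theorem coeff_coeff_markBlocks_pow (S : R⟦X⟧) (N m r : ℕ) :
    (coeff m (markBlocks S ^ N)).coeff r = N.choose r * coeff m (S ^ r) := by
  have hterm (q : ℕ) : coeff m ((C Polynomial.X * PowerSeries.map Polynomial.C S) ^ q) =
      Polynomial.monomial q (coeff m (S ^ q)) := by
    rw [mul_pow, ← map_pow, ← map_pow, coeff_C_mul, coeff_map, Polynomial.X_pow_mul_C,
      Polynomial.C_mul_X_pow_eq_monomial]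
  rw [markBlocks, add_comm, add_pow]
  simp only [one_pow, mul_one, map_sum, ← nsmul_eq_mul', map_nsmul, hterm,
    Polynomial.finsetSum_coeff, Polynomial.coeff_smul, Polynomial.coeff_monomial, smul_ite,
    smul_zero, sum_ite_eq']
  rw [← nsmul_eq_mul]
  split_ifs with hr
  · rfl
  · rw [Nat.choose_eq_zero_of_lt (by simpa using hr), zero_nsmul]

theorem mul_sum_runWeight_of_length_eq {R : Type*} [CommRing R] [IsDomain R] [CharZero R]
    {S : R⟦X⟧} (hS : coeff 0 S = 0) (l m j r : ℕ) :
    (l + m + j + 1 : R) * (l + m + j) *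
        ∑ w ∈ descents l m j with (uRuns w).length = r, runWeight S w =
      (l + m + j).choose j * (l * (l + m + j + 1) + m) *
        ((l + m + j + 1).choose r * coeff m (S ^ r)) := by
  have hcoeff : (descentSum (markBlocks S) 0 l m j).coeff r =
      ∑ w ∈ descents l m j with (uRuns w).length = r, runWeight S w := by
    simp [descentSum, runWeight_markBlocks, Polynomial.finsetSum_coeff, sum_filter,
      Polynomial.coeff_monomial]
  have h := mul_descentSum (coeff_zero_markBlocks hS) l m j
  rw [← hcoeff, ← coeff_coeff_markBlocks_pow]
  norm_cast at h ⊢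
  simpa only [Polynomial.natCast_mul, ← nsmul_eq_mul, Polynomial.coeff_smul] using
    congrArg (fun p => p.coeff r) h

end Marking

/-! ### Bell polynomials -/

theorem coeff_sum_monomial_pow {ι R : Type*} [DecidableEq ι] [CommSemiring R] (s : Finset ι)
    (e : ι → ℕ) (t : ι → R) (m r : ℕ) :
    PowerSeries.coeff m ((∑ i ∈ s, PowerSeries.monomial (e i) (t i)) ^ r) =
      ∑ k ∈ piAntidiag s r with ∑ i ∈ s, k i * e i = m,
        (Nat.multinomial s k : R) * ∏ i ∈ s, t i ^ k i := by
  rw [sum_pow_eq_sum_piAntidiag, map_sum, sum_filter]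
  refine sum_congr rfl fun k _ => ?_
  simp only [PowerSeries.monomial_pow, PowerSeries.prod_monomial]
  rw [← nsmul_eq_mul, map_nsmul, PowerSeries.coeff_monomial, nsmul_eq_mul, mul_ite, mul_zero]
  simp only [eq_comm]

theorem cast_multinomial {ι K : Type*} [Semifield K] [CharZero K] (s : Finset ι) (k : ι → ℕ) :
    (Nat.multinomial s k : K) = (∑ i ∈ s, k i).factorial / ∏ i ∈ s, ((k i).factorial : K) := by
  rw [eq_div_iff (prod_ne_zero_iff.2 fun i _ => Nat.cast_ne_zero.2 (k i).factorial_ne_zero),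
    mul_comm]
  exact_mod_cast Nat.multinomial_spec s k

theorem coeff_indicator_prod_X_pow {ι R : Type*} [CommSemiring R] (s : Finset ι) (k k' : ι → ℕ) :
    MvPolynomial.coeff (Finsupp.indicator s fun i _ => k i)
        (∏ i ∈ s, (MvPolynomial.X i : MvPolynomial ι R) ^ k' i) =
      if ∀ i ∈ s, k' i = k i then 1 else 0 := by
  classical
  rw [MvPolynomial.coeff_prod_X_pow]
  congr 1
  simp only [Finsupp.ext_iff, Finsupp.indicator_apply, eq_iff_iff]
  grind

theorem coeff_indicator_coeff_sum_monomial_X_pow {ι R : Type*} [CommSemiring R] (s : Finset ι)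
    (e k : ι → ℕ) :
    MvPolynomial.coeff (Finsupp.indicator s fun i _ => k i)
        (PowerSeries.coeff (∑ i ∈ s, k i * e i)
          ((∑ i ∈ s, PowerSeries.monomial (e i) (MvPolynomial.X i : MvPolynomial ι R)) ^
            ∑ i ∈ s, k i)) = Nat.multinomial s k := by
  classical
  have hk : ∀ i ∈ s, s.piecewise k (fun _ => 0) i = k i := fun i hi => piecewise_eq_of_mem _ _ _ hi
  have hterm (k' : ι → ℕ) : MvPolynomial.coeff (Finsupp.indicator s fun i _ => k i)
      ((Nat.multinomial s k' : MvPolynomial ι R) * ∏ i ∈ s, MvPolynomial.X i ^ k' i) =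
        if ∀ i ∈ s, k' i = k i then (Nat.multinomial s k' : R) else 0 := by
    rw [← nsmul_eq_mul, MvPolynomial.coeff_smul, coeff_indicator_prod_X_pow, smul_ite, smul_zero,
      nsmul_one]
  rw [coeff_sum_monomial_pow, MvPolynomial.coeff_sum]
  simp only [hterm]
  rw [sum_eq_single_of_mem (s.piecewise k fun _ => 0), if_pos hk, Nat.multinomial_congr hk]
  · rw [mem_filter, mem_piAntidiag, sum_congr rfl hk]
    refine ⟨⟨rfl, ?_⟩, sum_congr rfl fun i hi => by rw [hk i hi]⟩
    grind [piecewise_eq_of_notMem]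
  · intro k' hk' hne
    refine if_neg fun h => hne (funext fun i => ?_)
    have := (mem_piAntidiag.1 (mem_filter.1 hk').1).2 i
    by_cases hi : i ∈ s <;> grind [piecewise_eq_of_notMem]

theorem bellNorm_eq_coeff (m r : ℕ) (t : ℕ → ℚ) : bellNorm m r t =
    PowerSeries.coeff m ((∑ i ∈ Icc 1 m, PowerSeries.monomial i (t i)) ^ r) := by
  have hfin : ∑ i ∈ Icc 1 m, PowerSeries.monomial i (t i) =
      ∑ i : Fin m, PowerSeries.monomial (i + 1 : ℕ) (t (i + 1)) := by
    rw [Fin.sum_univ_eq_sum_range (fun i => PowerSeries.monomial (i + 1) (t (i + 1))),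
      range_eq_Ico, sum_Ico_add' (fun i => PowerSeries.monomial i (t i)) 0 m 1]
    rfl
  rw [hfin, coeff_sum_monomial_pow, bellNorm, ← sum_filter]
  refine sum_nbij (fun k i => (k i : ℕ)) ?_ ?_ ?_ ?_
  · intro k hk
    simpa [mul_comm] using hk
  · intro k _ k' _ h
    ext i
    exact congrFun h i
  · intro k hk
    simp only [coe_filter, mem_piAntidiag, Set.mem_ofPred_eq] at hk
    have hle (i : Fin m) : k i < m + 1 := by
      have hterm : k i * (i + 1 : ℕ) ≤ m :=
        (single_le_sum (f := fun i => k i * (i + 1 : ℕ)) (by simp) (mem_univ i)).trans_eq hk.2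
      nlinarith
    refine ⟨fun i => ⟨k i, hle i⟩, ?_, rfl⟩
    simpa [mul_comm] using hk
  · intro k hk
    rw [cast_multinomial, (mem_filter.1 hk).2.1]

theorem mul_sum_prod_pow_alpha {R : Type*} [CommRing R] [IsDomain R] [CharZero R] (t : ℕ → R)
    (m j r : ℕ) :
    (m + j + 1 : R) * (m + j) * ∑ w ∈ descents 0 m j with (uRuns w).length = r,
        ∏ i ∈ Icc 1 m, t i ^ alpha i w =
      m * (m + j).choose j * (m + j + 1).choose r *
        PowerSeries.coeff m ((∑ i ∈ Icc 1 m, PowerSeries.monomial i (t i)) ^ r) := by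
  set S : PowerSeries R := ∑ i ∈ Icc 1 m, PowerSeries.monomial i (t i) with hS
  have hcoeff (i : ℕ) : PowerSeries.coeff i S = if i ∈ Icc 1 m then t i else 0 := by
    simp only [hS, map_sum, PowerSeries.coeff_monomial, sum_ite_eq]
  have hweight : ∀ w ∈ descents 0 m j, runWeight S w = ∏ i ∈ Icc 1 m, t i ^ alpha i w := by
    intro w hw
    obtain ⟨-, rfl, -⟩ := mem_descents.1 hw
    rw [runWeight, prod_map_uRuns]
    exact prod_congr rfl fun i hi => by rw [hcoeff, if_pos hi]
  have h := mul_sum_runWeight_of_length_eq (by simp [hcoeff]) 0 m j r (S := S)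
  rw [sum_congr rfl fun w hw => hweight w (mem_filter.1 hw).1] at h
  simp only [Nat.cast_zero, zero_add, zero_mul] at h
  linear_combination h

theorem mul_card_descents_alpha_eq (m j : ℕ) (k : ℕ → ℕ) (hk : ∑ i ∈ Icc 1 m, k i * i = m) :
    (m + j + 1) * (m + j) * #{w ∈ descents 0 m j | ∀ i ∈ Icc (1 : ℕ) m, alpha i w = k i} =
      m * (m + j).choose j * (m + j + 1).choose (∑ i ∈ Icc 1 m, k i) *
        Nat.multinomial (Icc 1 m) k := by
  have hcount : MvPolynomial.coeff (Finsupp.indicator (Icc 1 m) fun i _ => k i)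
      (∑ w ∈ descents 0 m j with (uRuns w).length = ∑ i ∈ Icc 1 m, k i,
        ∏ i ∈ Icc 1 m, (MvPolynomial.X i : MvPolynomial ℕ ℤ) ^ alpha i w) =
      #{w ∈ descents 0 m j | ∀ i ∈ Icc (1 : ℕ) m, alpha i w = k i} := by
    simp only [MvPolynomial.coeff_sum, coeff_indicator_prod_X_pow, sum_boole, filter_filter]
    congr 2
    refine filter_congr fun w hw => ?_
    obtain ⟨-, rfl, -⟩ := mem_descents.1 hw
    rw [and_iff_right_iff_imp, ← sum_alpha]
    exact sum_congr rfl
  have hmultinomial := coeff_indicator_coeff_sum_monomial_X_pow (R := ℤ) (Icc 1 m) id k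
  simp only [id_eq, hk] at hmultinomial
  have h := mul_sum_prod_pow_alpha (MvPolynomial.X : ℕ → MvPolynomial ℕ ℤ) m j (∑ i ∈ Icc 1 m, k i)
  norm_cast at h
  replace h := congrArg (MvPolynomial.coeff (Finsupp.indicator (Icc 1 m) fun i _ => k i)) h
  rw [← nsmul_eq_mul, ← nsmul_eq_mul, MvPolynomial.coeff_smul, MvPolynomial.coeff_smul, hcount,
    hmultinomial, nsmul_eq_mul, nsmul_eq_mul] at h
  exact_mod_cast h

theorem stmt9 (k j m r : ℕ) (hm : 1 ≤ m) (hr : 1 ≤ r) (t : ℕ → ℚ) :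
    (∑ᶠ w ∈ {w ∈ qSet m j | (uRuns w).length = r},
        ∏ i ∈ Finset.Icc 1 m, t i ^ alpha i w) =
      (m : ℚ) / ((m + j + 1) * (m + j)) * Nat.choose (m + j) j *
        Nat.choose (m + j + 1) r * bellNorm m r t ∧
    ∀ rv : ℕ → ℕ, (∑ i ∈ Finset.Icc 1 m, i * rv i) = m →
      (∑ i ∈ Finset.Icc 1 m, rv i) = r →
      (Set.ncard {w ∈ qSet m j | ∀ i ∈ Finset.Icc 1 m, alpha i w = rv i} : ℚ) =
        (m : ℚ) / ((m + j + 1) * (m + j)) * Nat.choose (m + j) m *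
          Nat.choose (m + j + 1) r * (r.factorial : ℚ) /
          ∏ i ∈ Finset.Icc 1 m, ((rv i).factorial : ℚ) := by
  have hne : (m + j : ℚ) ≠ 0 := by positivity
  have hne' : (m + j + 1 : ℚ) ≠ 0 := by positivity
  constructor
  · have hwords : {w ∈ qSet m j | (uRuns w).length = r} =
        ({w ∈ descents 0 m j | (uRuns w).length = r} : Finset (List Step)) := by
      rw [coe_filter, ← coe_descents_zero]; rfl
    rw [hwords, finsum_mem_coe_finset, bellNorm_eq_coeff]
    field_simp
    linear_combination mul_sum_prod_pow_alpha t m j r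
  · rintro rv hm' rfl
    have hwords : {w ∈ qSet m j | ∀ i ∈ Icc 1 m, alpha i w = rv i} =
        ({w ∈ descents 0 m j | ∀ i ∈ Icc (1 : ℕ) m, alpha i w = rv i} : Finset (List Step)) := by
      rw [coe_filter, ← coe_descents_zero]; rfl
    have h := congrArg (Nat.cast : ℕ → ℚ)
      (mul_card_descents_alpha_eq m j rv (by simpa only [mul_comm] using hm'))
    push_cast at h
    rw [hwords, Set.ncard_coe_finset, mul_div_assoc, ← cast_multinomial, Nat.choose_symm_add]
    field_simp
    linear_combination h
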